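/- Let (c_k)_{k∈ℤ} be complex numbers with Σ_{k∈ℤ} |k| |c_k| < ∞ and let σ : ℝ → ℂ satisfy σ(z) = Σ_{k∈ℤ} c_k e^{ikz} for all z ∈ ℝ. Define σ̃(y,t) = (4πt)^{-1/2} ∫_ℝ e^{-(y-z)²/(4t)} σ(z) dz. Then for every t > 0 the function y ↦ σ̃(y,t) is differentiable, and |∂_y σ̃(y,t)| ≤ (Σ_{k∈ℤ} |k| |c_k|) e^{-t} for all y ∈ ℝ and t > 0. -/

import Mathlib

/-!
The heat kernel at time `t` is the density of the Gaussian law with mean `y` and variance `2t`, so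
`σ̃(y,t)` is the expectation of `σ` under this law and a mode `e^{az}` is multiplied by the
moment generating factor `e^{a²t}`. Hence the flow damps the frequency `ω` by `e^{-ω²t}`.
Summing over the modes and differentiating term by term, the zero frequency contributes nothing to
the derivative, and every other term gains at least the damping of the lowest nonzero frequency.
-/

open MeasureTheory Real

/-- The solution of the heat equation on `ℝ` with initial data `σ`,
given by convolution with the Gaussian heat kernel `(4πt)^{-1/2} e^{-(y-z)²/(4t)}`. -/
noncomputable def heatExt (σ : ℝ → ℂ) (y t : ℝ) : ℂ :=
  ((4 * π * t) ^ (-(1 : ℝ) / 2) : ℝ) •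
    ∫ z : ℝ, (Real.exp (-(y - z) ^ 2 / (4 * t)) : ℂ) * σ z

open ProbabilityTheory

lemma gaussianPDFReal_two_mul (y z : ℝ) {t : ℝ} (ht : 0 < t) :
    gaussianPDFReal y (2 * t).toNNReal z =
      (4 * π * t) ^ (-(1 : ℝ) / 2) * rexp (-(y - z) ^ 2 / (4 * t)) := by
  have hvar : ((2 * t).toNNReal : ℝ) = 2 * t := Real.coe_toNNReal _ (by positivity)
  have hconst : (√(2 * π * (2 * t)))⁻¹ = (4 * π * t) ^ (-(1 : ℝ) / 2) := by
    rw [neg_div, Real.rpow_neg (by positivity), ← Real.sqrt_eq_rpow]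
    ring_nf
  rw [gaussianPDFReal, hvar, hconst]
  ring_nf

lemma heatExt_eq_integral_gaussianReal (σ : ℝ → ℂ) (y : ℝ) {t : ℝ} (ht : 0 < t) :
    heatExt σ y t = ∫ z, σ z ∂gaussianReal y (2 * t).toNNReal := by
  have hvar : (2 * t).toNNReal ≠ 0 := (Real.toNNReal_pos.mpr (by positivity)).ne'
  rw [integral_gaussianReal_eq_integral_smul hvar, heatExt, ← integral_smul]
  congr with z
  rw [gaussianPDFReal_two_mul y z ht, mul_smul, Complex.real_smul (x := rexp _)]

lemma heatExt_cexp (a : ℂ) (y : ℝ) {t : ℝ} (ht : 0 < t) :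
    heatExt (fun z => Complex.exp (a * z)) y t = Complex.exp (a * y + a ^ 2 * t) := by
  have hmgf := complexMGF_id_gaussianReal (μ := y) (v := (2 * t).toNNReal) a
  rw [heatExt_eq_integral_gaussianReal _ y ht]
  simp only [complexMGF, id_eq] at hmgf
  rw [hmgf, Real.coe_toNNReal _ (by positivity)]
  push_cast
  ring_nf

/-- The solution `e^{iωy - ω²t}` of the heat equation with the Fourier mode `e^{iωy}` as initial
data. -/
noncomputable def heatMode (ω t y : ℝ) : ℂ :=
  Complex.exp (Complex.I * ω * y - ω ^ 2 * t)

lemma heatExt_cexp_I_mul (ω y : ℝ) {t : ℝ} (ht : 0 < t) :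
    heatExt (fun z => Complex.exp (Complex.I * ω * z)) y t = heatMode ω t y := by
  rw [heatExt_cexp _ y ht, heatMode, mul_pow, Complex.I_sq]
  ring_nf

lemma norm_heatMode (ω t y : ℝ) : ‖heatMode ω t y‖ = rexp (-(ω ^ 2 * t)) := by
  have hre : (Complex.I * ω * y - ω ^ 2 * t).re = -(ω ^ 2 * t) := by
    simp [← Complex.ofReal_pow]
  rw [heatMode, Complex.norm_exp, hre]

lemma hasDerivAt_heatMode (ω t y : ℝ) :
    HasDerivAt (heatMode ω t) (Complex.I * ω * heatMode ω t y) y := by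
  have hlin : HasDerivAt (fun x : ℝ => Complex.I * ω * x - ω ^ 2 * t) (Complex.I * ω) y := by
    simpa using ((Complex.ofRealCLM.hasDerivAt (x := y)).const_mul (Complex.I * (ω : ℂ))).sub_const
      ((ω : ℂ) ^ 2 * t)
  rw [mul_comm]
  exact hlin.cexp

lemma norm_I_mul_mul_heatMode_le {ω m t : ℝ} (hm : 0 ≤ m) (hω : ω ≠ 0 → m ≤ |ω|) (ht : 0 ≤ t)
    (y : ℝ) : ‖Complex.I * ω * heatMode ω t y‖ ≤ |ω| * rexp (-(m ^ 2 * t)) := by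
  rw [norm_mul, norm_mul, Complex.norm_I, one_mul, Complex.norm_real, Real.norm_eq_abs,
    norm_heatMode]
  rcases eq_or_ne ω 0 with rfl | hω0
  · simp
  · have hsq : m ^ 2 ≤ ω ^ 2 := sq_abs ω ▸ pow_le_pow_left₀ hm (hω hω0) 2
    gcongr

section FourierSeries

variable {ι : Type*} [Countable ι] {c : ι → ℂ} {ω : ι → ℝ} {σ : ℝ → ℂ} {t : ℝ}

lemma hasSum_heatExt (hc : Summable fun i => ‖c i‖)
    (hσ : ∀ z : ℝ, σ z = ∑' i, c i * Complex.exp (Complex.I * ω i * z)) (y : ℝ) (ht : 0 < t) :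
    HasSum (fun i => c i * heatMode (ω i) t y) (heatExt σ y t) := by
  let γ := gaussianReal y (2 * t).toNNReal
  let F (i : ι) (z : ℝ) : ℂ := c i * Complex.exp (Complex.I * ω i * z)
  have hnorm (i : ι) (z : ℝ) : ‖F i z‖ = ‖c i‖ := by simp [F, Complex.norm_exp]
  have hintegrable (i : ι) : Integrable (F i) γ :=
    .of_bound (by fun_prop) ‖c i‖ (.of_forall fun z => (hnorm i z).le)
  have hmode (i : ι) : ∫ z, F i z ∂γ = c i * heatMode (ω i) t y := by
    rw [integral_const_mul, ← heatExt_eq_integral_gaussianReal _ y ht, heatExt_cexp_I_mul _ y ht]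
  have hsum := hasSum_integral_of_summable_integral_norm hintegrable (by simpa [hnorm] using hc)
  rw [heatExt_eq_integral_gaussianReal σ y ht]
  simpa only [hmode, F, ← hσ] using hsum

lemma hasDerivAt_heatExt (hc : Summable fun i => ‖c i‖)
    (hωc : Summable fun i => |ω i| * ‖c i‖)
    (hσ : ∀ z : ℝ, σ z = ∑' i, c i * Complex.exp (Complex.I * ω i * z)) (y : ℝ) (ht : 0 < t) :
    HasDerivAt (fun y' => heatExt σ y' t)
      (∑' i, c i * (Complex.I * ω i * heatMode (ω i) t y)) y := by
  have hbound (i : ι) (x : ℝ) :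
      ‖c i * (Complex.I * ω i * heatMode (ω i) t x)‖ ≤ |ω i| * ‖c i‖ := by
    have hmode : ‖Complex.I * ω i * heatMode (ω i) t x‖ ≤ |ω i| := by
      simpa using norm_I_mul_mul_heatMode_le le_rfl (fun _ => abs_nonneg (ω i)) ht.le x
    rw [norm_mul, mul_comm]
    gcongr
  simp_rw [← fun y' => (hasSum_heatExt hc hσ y' ht).tsum_eq]
  exact hasDerivAt_tsum hωc (fun i x => (hasDerivAt_heatMode (ω i) t x).const_mul (c i)) hbound
    (hasSum_heatExt hc hσ y ht).summable y

end FourierSeries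

lemma summable_norm_of_summable_abs_mul_norm {E : Type*} [SeminormedAddCommGroup E] {c : ℤ → E}
    (hc : Summable fun k : ℤ => |(k : ℝ)| * ‖c k‖) : Summable fun k => ‖c k‖ := by
  refine Summable.of_norm_bounded_eventually hc ?_
  filter_upwards [(Set.finite_singleton (0 : ℤ)).compl_mem_cofinite] with k hk
  rw [norm_norm]
  exact le_mul_of_one_le_left (norm_nonneg _) (mod_cast Int.one_le_abs hk)

theorem stmt_3_general {ι : Type*} [Countable ι] {c : ι → ℂ} {ω : ι → ℝ} {m : ℝ} (hm : 0 ≤ m)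
    (hω : ∀ i, ω i ≠ 0 → m ≤ |ω i|) (hc : Summable fun i => ‖c i‖)
    (hωc : Summable fun i => |ω i| * ‖c i‖) {σ : ℝ → ℂ}
    (hσ : ∀ z : ℝ, σ z = ∑' i, c i * Complex.exp (Complex.I * ω i * z))
    (y : ℝ) {t : ℝ} (ht : 0 < t) :
    DifferentiableAt ℝ (fun y' => heatExt σ y' t) y ∧
      ‖deriv (fun y' => heatExt σ y' t) y‖ ≤ (∑' i, |ω i| * ‖c i‖) * rexp (-(m ^ 2 * t)) := by
  have hderiv := hasDerivAt_heatExt hc hωc hσ y ht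
  refine ⟨hderiv.differentiableAt, ?_⟩
  rw [hderiv.deriv]
  refine tsum_of_norm_bounded (hωc.hasSum.mul_right _) fun i => ?_
  calc ‖c i * (Complex.I * ω i * heatMode (ω i) t y)‖
      = ‖c i‖ * ‖Complex.I * ω i * heatMode (ω i) t y‖ := norm_mul _ _
    _ ≤ ‖c i‖ * (|ω i| * rexp (-(m ^ 2 * t))) := by
        gcongr
        exact norm_I_mul_mul_heatMode_le hm (hω i) ht.le y
    _ = |ω i| * ‖c i‖ * rexp (-(m ^ 2 * t)) := by ring

/-- If `σ(z) = Σ_{k∈ℤ} c_k e^{ikz}` with `Σ |k| |c_k| < ∞`, then for every `t > 0` the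
function `y ↦ σ̃(y,t)` is differentiable and `|∂_y σ̃(y,t)| ≤ (Σ |k| |c_k|) e^{-t}`. -/
theorem stmt_3 (c : ℤ → ℂ) (hc : Summable fun k : ℤ => |(k : ℝ)| * ‖c k‖)
    (σ : ℝ → ℂ)
    (hσ : ∀ z : ℝ, σ z = ∑' k : ℤ, c k * Complex.exp (Complex.I * (k : ℂ) * (z : ℂ))) :
    ∀ y t : ℝ, 0 < t →
      DifferentiableAt ℝ (fun y' => heatExt σ y' t) y ∧
      ‖deriv (fun y' => heatExt σ y' t) y‖
        ≤ (∑' k : ℤ, |(k : ℝ)| * ‖c k‖) * Real.exp (-t) := by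
  intro y t ht
  simpa using stmt_3_general (ω := fun k : ℤ => (k : ℝ)) zero_le_one
    (fun k hk => mod_cast Int.one_le_abs (mod_cast hk))
    (summable_norm_of_summable_abs_mul_norm hc) hc (by simpa using hσ) y ht
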